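/- For every real c > 0, every U ≥ 0, and every μ ≥ 0, U·e^{−μ} + (c/2)·(1 − e^{−μ} − μ·e^{−μ}) ≥ (c/2)·(1 − e^{−2U/c}). In other words, the function μ ↦ U·e^{−μ} + (c/2)(1 − e^{−μ} − μe^{−μ}) attains its minimum over μ ≥ 0 at μ = 2U/c, where its value is (c/2)(1 − e^{−2U/c}). -/

import Mathlib

/-!
Writing `U = (c / 2) t`, the left-hand side is `(c / 2) (1 - e^{-μ} (μ - t + 1))`, and
`e^{-μ} (μ - t + 1)` is the value at `-t` of the tangent line to `exp` at `-μ`, so by convexity it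
is at most `e^{-t}`, with equality at `μ = t`.
-/

theorem exp_mul_sub_add_one_le_exp (x y : ℝ) : Real.exp x * (y - x + 1) ≤ Real.exp y :=
  calc
    Real.exp x * (y - x + 1) ≤ Real.exp x * Real.exp (y - x) := by
      gcongr
      exact Real.add_one_le_exp (y - x)
    _ = Real.exp y := by rw [← Real.exp_add, add_sub_cancel]

theorem stmt6_general (c U μ : ℝ) (hc : 0 < c) :
    U * Real.exp (-μ) + (c / 2) * (1 - Real.exp (-μ) - μ * Real.exp (-μ))
      ≥ (c / 2) * (1 - Real.exp (-(2 * U / c))) :=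
  calc
    U * Real.exp (-μ) + (c / 2) * (1 - Real.exp (-μ) - μ * Real.exp (-μ))
      = (c / 2) * (1 - Real.exp (-μ) * (-(2 * U / c) - -μ + 1)) := by
        field_simp
        ring
    _ ≥ (c / 2) * (1 - Real.exp (-(2 * U / c))) := by
        gcongr
        exact exp_mul_sub_add_one_le_exp (-μ) (-(2 * U / c))

/-- For every real `c > 0`, every `U ≥ 0`, and every `μ ≥ 0`,
`U·e^{−μ} + (c/2)·(1 − e^{−μ} − μ·e^{−μ}) ≥ (c/2)·(1 − e^{−2U/c})`;
i.e. the function of `μ` attains its minimum over `μ ≥ 0` at `μ = 2U/c`,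
where its value is `(c/2)(1 − e^{−2U/c})`. -/
theorem stmt6 (c U μ : ℝ) (hc : 0 < c) (hU : 0 ≤ U) (hμ : 0 ≤ μ) :
    U * Real.exp (-μ) + (c / 2) * (1 - Real.exp (-μ) - μ * Real.exp (-μ))
      ≥ (c / 2) * (1 - Real.exp (-(2 * U / c))) :=
  stmt6_general c U μ hc
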